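/- Let k ∈ ℤ and r ∈ (0,1), and write L = log r. Define Φ : ℝ → M₂(ℝ) by Φ(s) = [[cos(ks/2), sin(ks/2) + (s/L)cos(ks/2)], [−sin(ks/2), cos(ks/2) − (s/L)sin(ks/2)]]. Then Φ(0) = 𝟙, Φ satisfies the matrix ODE Φ'(s) = A(s)·Φ(s) where A(s) = (1/(2L))·([[sin(ks), cos(ks)], [cos(ks), −sin(ks)]] − (kL + 1)·[[0,−1],[1,0]]), and Φ(2π) = (−1)^k·[[1, 2π/L],[0,1]]. In particular the monodromy of this linear system around the circle of radius r equals (−1)^k·[[1, 2π/log r],[0,1]]. -/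

import Mathlib

open Real Set Matrix

/-- The fundamental solution `Φ(s)` of the circle-direction parallel transport ODE for the
logarithmic model with parameter `k`, where `L = log r`. -/
noncomputable def Φ (k : ℤ) (L s : ℝ) : Matrix (Fin 2) (Fin 2) ℝ :=
  !![Real.cos (k * s / 2), Real.sin (k * s / 2) + s / L * Real.cos (k * s / 2);
     -Real.sin (k * s / 2), Real.cos (k * s / 2) - s / L * Real.sin (k * s / 2)]

/-- The coefficient matrix `A(s)` of the linear system. -/
noncomputable def Acoef (k : ℤ) (L s : ℝ) : Matrix (Fin 2) (Fin 2) ℝ :=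
  (1 / (2 * L)) •
    (!![Real.sin (k * s), Real.cos (k * s); Real.cos (k * s), -Real.sin (k * s)]
      - ((k : ℝ) * L + 1) • (!![0, -1; 1, 0] : Matrix (Fin 2) (Fin 2) ℝ))

/-! The solution factors as `Φ(s) = R(-ks/2) T(s/L)`, a rotation times a transvection. Each factor
is a one-parameter group, with generator `-(k/2) J` resp. `L⁻¹ E`, where `J` is the quarter turn and
`E` the elementary matrix at position `(0, 1)`; hence `Φ' = (-(k/2) J + L⁻¹ R E R⁻¹) Φ`. Since `E`
is half the difference of a reflection and `J`, conjugating it by `R` turns the reflection by twice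
the angle, which gives `A`. At `s = 2π` the rotation factor is `(-1)^k`. -/

section MatrixCalculus

variable {𝕜 l m n : Type*} [NontriviallyNormedField 𝕜]

lemma hasDerivAt_matrix_iff {F : Type*} [NormedAddCommGroup F] [NormedSpace 𝕜 F]
    [Finite m] [Finite n] {M : 𝕜 → Matrix m n F} {M' : Matrix m n F} {t : 𝕜} :
    HasDerivAt M M' t ↔ ∀ i j, HasDerivAt (fun s => M s i j) (M' i j) t := by
  cases nonempty_fintype m
  cases nonempty_fintype n
  exact (hasDerivAt_pi (E' := fun _ => n → F)).trans (forall_congr' fun _ => hasDerivAt_pi)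

lemma hasDerivAt_matrix_comp_const_mul {F : Type*} [NormedAddCommGroup F] [NormedSpace 𝕜 F]
    [Finite m] [Finite n] {M : 𝕜 → Matrix m n F} {M' : Matrix m n F} (a t : 𝕜)
    (hM : HasDerivAt M M' (a * t)) : HasDerivAt (fun s => M (a * s)) (a • M') t := by
  rw [hasDerivAt_matrix_iff] at hM ⊢
  exact fun i j => (hM i j).scomp t (hasDerivAt_const_mul a)

lemma hasDerivAt_matrix_mul {𝔸 : Type*} [NormedRing 𝔸] [NormedAlgebra 𝕜 𝔸]
    [Finite l] [Fintype m] [Finite n]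
    {M : 𝕜 → Matrix l m 𝔸} {N : 𝕜 → Matrix m n 𝔸} {M' : Matrix l m 𝔸} {N' : Matrix m n 𝔸} {t : 𝕜}
    (hM : HasDerivAt M M' t) (hN : HasDerivAt N N' t) :
    HasDerivAt (fun s => M s * N s) (M' * N t + M t * N') t := by
  rw [hasDerivAt_matrix_iff] at hM hN ⊢
  intro i j
  simp only [Matrix.add_apply, Matrix.mul_apply, ← Finset.sum_add_distrib]
  exact HasDerivAt.fun_sum fun a _ => (hM i a).fun_mul (hN a j)

lemma hasDerivAt_matrix_mul_of_linear {𝔸 : Type*} [NormedRing 𝔸] [NormedAlgebra 𝕜 𝔸]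
    [Fintype m] [Finite n] [DecidableEq m]
    {M : 𝕜 → Matrix m m 𝔸} {N : 𝕜 → Matrix m n 𝔸} {B C K : Matrix m m 𝔸} {t : 𝕜}
    (hM : HasDerivAt M (B * M t) t) (hN : HasDerivAt N (C * N t) t) (hK : K * M t = 1) :
    HasDerivAt (fun s => M s * N s) ((B + M t * C * K) * (M t * N t)) t := by
  have hcancel : K * (M t * N t) = N t := by rw [← Matrix.mul_assoc, hK, Matrix.one_mul]
  convert hasDerivAt_matrix_mul hM hN using 1
  simp only [Matrix.add_mul, Matrix.mul_assoc, hcancel]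

lemma hasDerivAt_transvection [Fintype n] [DecidableEq n] {i j : n} (hij : i ≠ j) (c : 𝕜) :
    HasDerivAt (transvection i j) (single i j 1 * transvection i j c) c := by
  have hgen : single i j 1 * transvection i j c = single i j 1 := by
    simp [transvection, Matrix.mul_add, hij.symm]
  rw [hgen, hasDerivAt_matrix_iff]
  intro a b
  simp only [transvection, Matrix.add_apply, single_apply]
  split_ifs
  · exact (hasDerivAt_id c).const_add _
  · exact hasDerivAt_const c _

end MatrixCalculus

lemma single_zero_one {R : Type*} [Zero R] (c : R) :
    single (0 : Fin 2) (1 : Fin 2) c = !![0, c; 0, 0] := by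
  ext i j
  fin_cases i <;> fin_cases j <;> simp

lemma transvection_zero_one {R : Type*} [CommRing R] (c : R) :
    transvection (0 : Fin 2) 1 c = !![1, c; 0, 1] := by
  simp [transvection, single_zero_one, one_fin_two]

/-- The matrix of the counterclockwise rotation of `ℝ²` by the angle `θ`; it is the rotation factor
of `Φ`. -/
noncomputable def planeRotation (θ : ℝ) : Matrix (Fin 2) (Fin 2) ℝ :=
  !![cos θ, -sin θ; sin θ, cos θ]

lemma planeRotation_zero : planeRotation 0 = 1 := by
  simp [planeRotation, one_fin_two]

lemma planeRotation_add (θ φ : ℝ) :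
    planeRotation (θ + φ) = planeRotation θ * planeRotation φ := by
  ext i j
  fin_cases i <;> fin_cases j <;> simp [planeRotation, cos_add, sin_add] <;> ring

lemma planeRotation_neg_mul_self (θ : ℝ) : planeRotation (-θ) * planeRotation θ = 1 := by
  rw [← planeRotation_add, neg_add_cancel, planeRotation_zero]

lemma planeRotation_int_mul_pi (n : ℤ) : planeRotation (n * π) = (-1 : ℝ) ^ n • 1 := by
  simp [planeRotation, one_fin_two, sin_int_mul_pi, cos_int_mul_pi]

lemma hasDerivAt_planeRotation (θ : ℝ) :
    HasDerivAt planeRotation (!![0, -1; 1, 0] * planeRotation θ) θ := by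
  have hderiv : !![0, -1; 1, 0] * planeRotation θ = !![-sin θ, -cos θ; cos θ, -sin θ] := by
    simp [planeRotation]
  rw [hderiv, hasDerivAt_matrix_iff]
  intro i j
  fin_cases i <;> fin_cases j
  exacts [hasDerivAt_cos θ, (hasDerivAt_sin θ).neg, hasDerivAt_sin θ, hasDerivAt_cos θ]

lemma planeRotation_conj_single (θ : ℝ) :
    planeRotation θ * single 0 1 1 * planeRotation (-θ) = (1 / 2 : ℝ) •
      (!![-sin (2 * θ), cos (2 * θ); cos (2 * θ), sin (2 * θ)] - !![0, -1; 1, 0]) := by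
  have hproduct : planeRotation θ * single 0 1 1 * planeRotation (-θ) =
      !![-(sin θ * cos θ), cos θ ^ 2; -sin θ ^ 2, sin θ * cos θ] := by
    simp [planeRotation, single_zero_one, pow_two, mul_comm]
  have hsin_cos : sin θ * cos θ = sin (2 * θ) / 2 := by rw [sin_two_mul]; ring
  rw [hproduct, hsin_cos, cos_sq, sin_sq_eq_half_sub]
  ext i j
  fin_cases i <;> fin_cases j <;> simp <;> ring

lemma hasDerivAt_planeRotation_mul_transvection (ω τ s : ℝ) :
    HasDerivAt (fun s => planeRotation (ω * s) * transvection 0 1 (τ * s))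
      ((ω • !![0, -1; 1, 0] + τ • (planeRotation (ω * s) * single 0 1 1 * planeRotation (-(ω * s))))
        * (planeRotation (ω * s) * transvection 0 1 (τ * s))) s := by
  have hR : HasDerivAt (fun s => planeRotation (ω * s))
      (ω • !![0, -1; 1, 0] * planeRotation (ω * s)) s := by
    rw [Matrix.smul_mul]
    exact hasDerivAt_matrix_comp_const_mul ω s (hasDerivAt_planeRotation (ω * s))
  have hT : HasDerivAt (fun s => (transvection 0 1 (τ * s) : Matrix (Fin 2) (Fin 2) ℝ))
      (τ • single 0 1 1 * transvection 0 1 (τ * s)) s := by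
    rw [Matrix.smul_mul]
    exact hasDerivAt_matrix_comp_const_mul τ s (hasDerivAt_transvection zero_ne_one (τ * s))
  simpa only [Matrix.mul_smul, Matrix.smul_mul] using
    hasDerivAt_matrix_mul_of_linear hR hT (planeRotation_neg_mul_self (ω * s))

lemma Φ_eq_planeRotation_mul_transvection (k : ℤ) (L s : ℝ) :
    Φ k L s = planeRotation (-(k / 2) * s) * transvection 0 1 (L⁻¹ * s) := by
  have hangle : -(k / 2 : ℝ) * s = -(k * s / 2) := by ring
  rw [hangle, transvection_zero_one]
  simp [Φ, planeRotation, div_eq_inv_mul, mul_comm, add_comm, sub_eq_neg_add]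

lemma Acoef_eq_add_planeRotation_conj (k : ℤ) {L : ℝ} (hL : L ≠ 0) (s : ℝ) :
    Acoef k L s = -(k / 2 : ℝ) • !![0, -1; 1, 0] +
      L⁻¹ • (planeRotation (-(k / 2) * s) * single 0 1 1 * planeRotation (-(-(k / 2) * s))) := by
  have hangle : 2 * (-(k / 2 : ℝ) * s) = -(k * s) := by ring
  rw [planeRotation_conj_single, hangle, sin_neg, cos_neg, neg_neg, Acoef]
  match_scalars <;> field_simp
  ring

lemma hasDerivAt_Φ (k : ℤ) {L : ℝ} (hL : L ≠ 0) (s : ℝ) :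
    HasDerivAt (Φ k L) (Acoef k L s * Φ k L s) s := by
  rw [funext (Φ_eq_planeRotation_mul_transvection k L), Acoef_eq_add_planeRotation_conj k hL]
  exact hasDerivAt_planeRotation_mul_transvection (-(k / 2)) L⁻¹ s

lemma Φ_zero (k : ℤ) (L : ℝ) : Φ k L 0 = 1 := by
  simp [Φ_eq_planeRotation_mul_transvection, planeRotation_zero]

lemma Φ_two_pi (k : ℤ) (L : ℝ) : Φ k L (2 * π) = (-1 : ℝ) ^ k • !![1, 2 * π / L; 0, 1] := by
  have hangle : -(k / 2 : ℝ) * (2 * π) = (-k : ℤ) * π := by push_cast; ring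
  have hsign : (-1 : ℝ) ^ (-k) = (-1) ^ k := by rw [← _root_.inv_zpow', inv_neg_one]
  rw [Φ_eq_planeRotation_mul_transvection, hangle, planeRotation_int_mul_pi, hsign,
    Matrix.smul_mul, Matrix.one_mul, transvection_zero_one, ← div_eq_inv_mul]

theorem stmt6_general (k : ℤ) {L : ℝ} (hL : L ≠ 0) :
    Φ k L 0 = 1 ∧
    (∀ s : ℝ, HasDerivAt (Φ k L) (Acoef k L s * Φ k L s) s) ∧
    Φ k L (2 * π) = (-1 : ℝ) ^ k • !![1, 2 * π / L; 0, 1] :=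
  ⟨Φ_zero k L, hasDerivAt_Φ k hL, Φ_two_pi k L⟩

theorem stmt6 (k : ℤ) (r : ℝ) (hr : r ∈ Ioo (0 : ℝ) 1) :
    Φ k (Real.log r) 0 = 1 ∧
    (∀ s : ℝ, ∀ i j : Fin 2,
      HasDerivAt (fun s : ℝ => Φ k (Real.log r) s i j)
        ((Acoef k (Real.log r) s * Φ k (Real.log r) s) i j) s) ∧
    Φ k (Real.log r) (2 * π)
      = ((-1 : ℝ) ^ k) • (!![1, 2 * π / Real.log r; 0, 1] : Matrix (Fin 2) (Fin 2) ℝ) := by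
  simpa only [hasDerivAt_matrix_iff] using stmt6_general k (log_neg hr.1 hr.2).ne
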